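/- arXiv:math/0703203 — 2 statements merged into one kernel-verified Lean document; each statement's English description precedes it below -/
import Mathlib

section
/- Let R be a commutative ring, m ≥ 1, and A = (a_{ij}) an m×m matrix over R. In the multivariate formal power series ring R[[x₁,…,x_m]], let X = diag(x₁,…,x_m). Then Σ_r G(r) x^r = det(I − XA)⁻¹, where the sum is over all nonnegative integer vectors r = (r₁,…,r_m), G(r) ∈ R is the coefficient of x^r = x₁^{r₁}⋯x_m^{r_m} in ∏_{i=1}^m (a_{i1}x₁ + ⋯ + a_{im}x_m)^{r_i}, and the inverse is taken in R[[x₁,…,x_m]] (the series det(I − XA) has constant term 1, hence is invertible). -/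
open MvPolynomial in
lemma mm_kill {R : Type*} [CommRing R] {m : ℕ} (r : Fin m →₀ ℕ) (p : MvPolynomial (Fin m) R) :
    coeff r (aeval (R := R) (fun j => if r j = 0 then (0 : MvPolynomial (Fin m) R) else X j) p)
      = coeff r p := by
  induction p using MvPolynomial.induction_on' with
  | add p q hp hq => simp only [map_add, coeff_add, hp, hq]
  | monomial s a =>
    rw [aeval_monomial]
    by_cases h : ∃ j, r j = 0 ∧ s j ≠ 0
    · obtain ⟨j, hj, hs⟩ := h
      have h0 : (s.prod fun i k => (if r i = 0 then (0 : MvPolynomial (Fin m) R) else X i) ^ k)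
          = 0 := by
        apply Finset.prod_eq_zero (i := j) (by simpa using hs)
        simp [hj, hs]
      have hne : s ≠ r := by
        rintro rfl
        exact hs hj
      rw [h0, mul_zero, coeff_zero, coeff_monomial, if_neg hne]
    · push Not at h
      have h1 : (s.prod fun i k => (if r i = 0 then (0 : MvPolynomial (Fin m) R) else X i) ^ k)
          = s.prod fun i k => X i ^ k := by
        apply Finset.prod_congr rfl
        intro i hi
        have : r i ≠ 0 := fun h' => (Finsupp.mem_support_iff.mp hi) (h i h')
        simp [this]
      rw [h1, monomial_eq]
      rfl

open Classical in
lemma mm_row {R : Type*} [CommRing R] {m : ℕ} (L : Fin m → MvPolynomial (Fin m) R)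
    (S : MvPowerSeries (Fin m) R)
    (hS : ∀ r : Fin m →₀ ℕ,
      MvPowerSeries.coeff (R := R) r S = MvPolynomial.coeff r (∏ i, L i ^ (r i)))
    (p q : Fin m → R) (r : Fin m →₀ ℕ) :
    MvPowerSeries.coeff r ((∏ i, (MvPowerSeries.C (p i)
        + MvPowerSeries.X i * MvPowerSeries.C (q i))) * S)
      = MvPolynomial.coeff r (∏ i, (MvPolynomial.C (p i) * L i ^ r i
        + if r i = 0 then 0 else MvPolynomial.C (q i) * MvPolynomial.X i * L i ^ (r i - 1))) := by
  rw [Finset.prod_add, Finset.prod_add, Finset.sum_mul, map_sum, MvPolynomial.coeff_sum]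
  apply Finset.sum_congr rfl
  intro T _
  set e : Fin m →₀ ℕ := ∑ i ∈ Finset.univ \ T, Finsupp.single i 1 with he
  have he' : ∀ i, e i = if i ∈ T then 0 else 1 := by
    intro i
    rw [he, Finsupp.finset_sum_apply]
    simp [Finsupp.single_apply, Finset.sum_ite_eq']
  set c : R := (∏ i ∈ T, p i) * ∏ i ∈ Finset.univ \ T, q i with hc
  have hX : (∏ i ∈ Finset.univ \ T, (MvPowerSeries.X i : MvPowerSeries (Fin m) R))
      = MvPowerSeries.monomial e 1 := by
    have : (∏ i ∈ Finset.univ \ T, (MvPolynomial.X i : MvPolynomial (Fin m) R))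
      = MvPolynomial.monomial e 1 := by
      rw [he, MvPolynomial.monomial_sum_one]
      rfl
    have h2 := congrArg (MvPolynomial.coeToMvPowerSeries.ringHom (σ := Fin m) (R := R)) this
    rw [map_prod] at h2
    simpa using h2
  have h1 : (∏ i ∈ T, MvPowerSeries.C (σ := Fin m) (p i)) * (∏ i ∈ Finset.univ \ T,
      (MvPowerSeries.X i * MvPowerSeries.C (q i))) * S
      = MvPowerSeries.C c * (MvPowerSeries.monomial e 1 * S) := by
    rw [Finset.prod_mul_distrib, hX, hc, map_mul, map_prod, map_prod]
    ring
  rw [h1, MvPowerSeries.coeff_C_mul, MvPowerSeries.coeff_monomial_mul]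
  by_cases h : e ≤ r
  · have hr : ∀ i ∈ Finset.univ \ T, r i ≠ 0 := by
      intro i hi
      have := h i
      rw [he'] at this
      simp at hi
      simp [hi] at this
      omega
    have h2 : (∏ i ∈ T, MvPolynomial.C (p i) * L i ^ r i) * (∏ i ∈ Finset.univ \ T,
        if r i = 0 then 0 else MvPolynomial.C (q i) * MvPolynomial.X i * L i ^ (r i - 1))
        = MvPolynomial.C c * (MvPolynomial.monomial e 1 * ∏ i, L i ^ ((r - e) i)) := by
      have h3 : (∏ i ∈ Finset.univ \ T,
        if r i = 0 then 0 else MvPolynomial.C (q i) * MvPolynomial.X i * L i ^ (r i - 1))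
        = ∏ i ∈ Finset.univ \ T, MvPolynomial.C (q i) * MvPolynomial.X i * L i ^ ((r - e) i) := by
        apply Finset.prod_congr rfl
        intro i hi
        rw [if_neg (hr i hi)]
        simp at hi
        simp [he', hi]
      have h4 : (∏ i ∈ T, MvPolynomial.C (p i) * L i ^ r i)
        = ∏ i ∈ T, MvPolynomial.C (p i) * L i ^ ((r - e) i) := by
        apply Finset.prod_congr rfl
        intro i hi
        simp [he', hi]
      rw [h3, h4, ← Finset.prod_sdiff (Finset.subset_univ T), he,
        MvPolynomial.monomial_sum_one, ← he, hc, map_mul, map_prod, map_prod]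
      simp only [Finset.prod_mul_distrib]
      change _ * (_ * (∏ i ∈ Finset.univ \ T, MvPolynomial.X i) * _) = _ * ((∏ i ∈ Finset.univ \ T, MvPolynomial.X i) * _)
      ring
    rw [h2, MvPolynomial.coeff_C_mul, MvPolynomial.coeff_monomial_mul', if_pos h, if_pos h, hS]
  · rw [if_neg h, mul_zero]
    have : ∃ i, i ∉ T ∧ r i = 0 := by
      by_contra hcon
      push Not at hcon
      apply h
      intro i
      rw [he']
      split_ifs with hi
      · simp
      · exact Nat.one_le_iff_ne_zero.mpr (hcon i hi)
    obtain ⟨i, hi, hri⟩ := this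
    rw [Finset.prod_eq_zero (s := Finset.univ \ T) (i := i) (by simpa using hi) (by simp [hri])]
    simp

theorem macmahon_master (R : Type*) [CommRing R] {m : ℕ} (hm : 1 ≤ m)
    (A : Matrix (Fin m) (Fin m) R)
    (S : MvPowerSeries (Fin m) R)
    (hS : ∀ r : Fin m →₀ ℕ,
      MvPowerSeries.coeff (R := R) r S =
        MvPolynomial.coeff r
          (∏ i, (∑ j, MvPolynomial.C (A i j) * MvPolynomial.X j) ^ (r i))) :
    Matrix.det
        (1 - Matrix.diagonal (fun i => (MvPowerSeries.X i : MvPowerSeries (Fin m) R)) *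
          A.map ⇑(MvPowerSeries.C (σ := Fin m) (R := R))) * S = 1 := by
  classical
  set L : Fin m → MvPolynomial (Fin m) R :=
    fun i => ∑ j, MvPolynomial.C (A i j) * MvPolynomial.X j with hL
  ext r
  set N : Matrix (Fin m) (Fin m) (MvPolynomial (Fin m) R) := Matrix.of fun i j =>
    MvPolynomial.C ((1 : Matrix (Fin m) (Fin m) R) i j) * L i ^ r i
      + if r i = 0 then 0 else MvPolynomial.C (-A i j) * MvPolynomial.X i * L i ^ (r i - 1) with hN
  have key : MvPowerSeries.coeff r (Matrix.det
        (1 - Matrix.diagonal (fun i => (MvPowerSeries.X i : MvPowerSeries (Fin m) R)) *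
          A.map ⇑(MvPowerSeries.C (σ := Fin m) (R := R))) * S)
      = MvPolynomial.coeff r N.det := by
    rw [← Matrix.det_transpose, ← Matrix.det_transpose N, Matrix.det_apply, Matrix.det_apply,
      Finset.sum_mul, map_sum, MvPolynomial.coeff_sum]
    apply Finset.sum_congr rfl
    intro σ _
    have := mm_row L S hS (fun i => (1 : Matrix (Fin m) (Fin m) R) i (σ i)) (fun i => -A i (σ i)) r
    have e1 : ∀ i, (1 - Matrix.diagonal (fun i => (MvPowerSeries.X i : MvPowerSeries (Fin m) R)) *
          A.map ⇑(MvPowerSeries.C (σ := Fin m) (R := R))).transpose (σ i) i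
        = MvPowerSeries.C ((1 : Matrix (Fin m) (Fin m) R) i (σ i))
          + MvPowerSeries.X i * MvPowerSeries.C (-A i (σ i)) := by
      intro i
      rw [Matrix.transpose_apply, Matrix.sub_apply, Matrix.diagonal_mul, Matrix.map_apply,
        Matrix.one_apply, Matrix.one_apply]
      split_ifs <;> simp [sub_eq_add_neg]
    have e2 : ∀ i, N.transpose (σ i) i = MvPolynomial.C ((1 : Matrix (Fin m) (Fin m) R) i (σ i)) * L i ^ r i
      + if r i = 0 then 0 else MvPolynomial.C (-A i (σ i)) * MvPolynomial.X i * L i ^ (r i - 1) :=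
      fun i => rfl
    simp only [e1, e2]
    rcases Int.units_eq_one_or (Equiv.Perm.sign σ) with h | h
    · rw [h, one_smul, one_smul]
      exact this
    · rw [h, Units.neg_smul, Units.neg_smul, one_smul, one_smul, neg_mul, map_neg,
        MvPolynomial.coeff_neg]
      exact congrArg _ this
  rw [key]
  by_cases hr : r = 0
  · subst hr
    have : N = 1 := by
      ext1 i j
      simp [hN, Matrix.one_apply]
    rw [this]
    simp
  · rw [MvPowerSeries.coeff_one, if_neg hr, ← mm_kill]
    set κ := MvPolynomial.aeval (R := R)
      (fun j => if r j = 0 then (0 : MvPolynomial (Fin m) R) else MvPolynomial.X j) with hκ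
    obtain ⟨k, hk⟩ : ∃ k, r k ≠ 0 := by
      by_contra hcon
      push Not at hcon
      exact hr (Finsupp.ext hcon)
    set v : Fin m → MvPolynomial (Fin m) R :=
      fun j => if r j = 0 then (0 : MvPolynomial (Fin m) R) else MvPolynomial.X j with hv
    have hκX : ∀ j, κ (MvPolynomial.X j) = v j := fun j => by rw [hκ, MvPolynomial.aeval_X]
    have hκC : ∀ a, κ (MvPolynomial.C a) = MvPolynomial.C a := fun a => by
      rw [hκ, MvPolynomial.aeval_C]; rfl
    have hκL : ∀ i, κ (L i) = ∑ j, MvPolynomial.C (A i j) * v j := by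
      intro i
      simp only [hL, map_sum, map_mul, hκX, hκC]
    have hmv : (κ.toRingHom.mapMatrix N).mulVec v = 0 := by
      ext1 i
      have hent : ∀ j, κ.toRingHom.mapMatrix N i j = MvPolynomial.C ((1 : Matrix (Fin m) (Fin m) R) i j) * κ (L i) ^ r i
          + if r i = 0 then 0 else MvPolynomial.C (-A i j) * v i * κ (L i) ^ (r i - 1) := by
        intro j
        change κ (N i j) = _
        simp only [hN, Matrix.of_apply, map_add, map_mul, map_pow, hκC]
        split_ifs
        · simp
        · simp only [map_mul, map_pow, hκC, hκX]
      have hone : ∑ j, MvPolynomial.C ((1 : Matrix (Fin m) (Fin m) R) i j) * κ (L i) ^ r i * v j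
          = κ (L i) ^ r i * v i := by
        rw [Finset.sum_eq_single i]
        · simp
        · intro j _ hj
          simp [Matrix.one_apply, hj.symm]
        · simp
      simp only [Matrix.mulVec, dotProduct, hent, add_mul, Finset.sum_add_distrib, hone,
        Pi.zero_apply]
      by_cases hi : r i = 0
      · simp [hi, hv]
      · simp only [if_neg hi]
        have : ∑ j, MvPolynomial.C (-A i j) * v i * κ (L i) ^ (r i - 1) * v j
            = - (v i * κ (L i) ^ (r i - 1) * κ (L i)) := by
          conv_rhs => rw [hκL i]
          rw [← hκL i, hκL i, Finset.mul_sum, ← Finset.sum_neg_distrib]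
          apply Finset.sum_congr rfl
          intro j _
          rw [map_neg]
          ring
        rw [this, mul_assoc, ← pow_succ, Nat.sub_add_cancel (Nat.one_le_iff_ne_zero.mpr hi)]
        ring
    have hdet : (κ.toRingHom.mapMatrix N).det * v k = 0 := by
      have h1 := congrArg (fun w => (κ.toRingHom.mapMatrix N).adjugate.mulVec w) hmv
      simp only [Matrix.mulVec_mulVec, Matrix.adjugate_mul, Matrix.mulVec_zero] at h1
      have h2 := congrFun h1 k
      simpa [Matrix.smul_mulVec] using h2
    have hz : κ N.det = 0 := by
      have h3 : κ N.det = (κ.toRingHom.mapMatrix N).det := RingHom.map_det κ.toRingHom N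
      rw [h3]
      rw [hv] at hdet
      simp only [if_neg hk] at hdet
      ext s
      have := congrArg (MvPolynomial.coeff (s + Finsupp.single k 1)) hdet
      rwa [MvPolynomial.coeff_mul_X] at this
    rw [hz, MvPolynomial.coeff_zero]
end

section
/- Let R be a commutative ring, m ≥ 1, A = (a_{ij}) an m×m matrix over R, and let d = (d₁,…,d_m) be an integer vector with d₁+⋯+d_m = 0. In R[[x₁,…,x_m]], let X = diag(x₁,…,x_m), and define F_A(d) = Σ G(p;r) x^p, where the sum is over all pairs of nonnegative integer vectors (p,r) with p = r + d, and G(p;r) ∈ R is the coefficient of x^r in ∏_{i=1}^m (a_{i1}x₁ + ⋯ + a_{im}x_m)^{p_i}. Let ℳ be the multiset consisting of each index i with dᵢ < 0 taken with multiplicity −dᵢ, let S(ℳ) be the set of all orderings (permutations) π = π₁π₂…π_δ of ℳ, and let N₁ ≤ N₂ ≤ ⋯ ≤ N_δ be the weakly increasing list consisting of each index i with dᵢ > 0 taken with multiplicity dᵢ (so δ is the common size). Let M and N be the sums of the elements of ℳ and of (N₁,…,N_δ) counted with multiplicity. For π ∈ S(ℳ) and 1 ≤ k ≤ δ, set I_π^k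 = {π₁,…,π_k} (as a set), let ε_π^k be the number of elements of I_π^{k−1} lying strictly between π_k and N_k, and set J_π^k = (I_π^k ∖ {π_k}) ∪ {N_k}. Then F_A(d) = (−1)^{M+N} · det(I − XA)⁻¹ · Σ_{π ∈ S(ℳ)} ∏_{k=1}^δ (−1)^{ε_π^k} · det((I − XA)^{I_π^k, J_π^k}) · det((I − XA)^{I_π^k, I_π^k})⁻¹, where for sets I, J the notation B^{I,J} means the matrix B with rows indexed by I and columns indexed by J deleted, the factors in the product over k are taken in the order k = 1,…,δ, and the inverses are taken in R[[x₁,…,x_m]] (each series det((I − XA)^{I,I}) and det(I − XA) has constant term 1, hence is invertible). -/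
/-!
Statement 13: the generalization of the MacMahon master theorem (Theorem `genmm1` of the
paper), for a commutative ring `R`: the generating function
`F_A(d) = Σ_{p = r + d} G(p;r) x^p` equals
`(−1)^{M+N} det(I−XA)⁻¹ Σ_{π ∈ S(ℳ)} ∏_{k=1}^δ (−1)^{ε_π^k} det((I−XA)^{I_π^k,J_π^k}) ·
det((I−XA)^{I_π^k,I_π^k})⁻¹`.
-/

noncomputable section

variable {R : Type*} [CommRing R] {m : ℕ}

/-- `G(p;r)`: the coefficient of `x^r` in `∏_i (a_{i1}x₁ + ⋯ + a_{im}x_m)^{p_i}`. -/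
def Gcoef (A : Matrix (Fin m) (Fin m) R) (p r : Fin m →₀ ℕ) : R :=
  MvPolynomial.coeff r
    (∏ i, (∑ j, MvPolynomial.C (A i j) * MvPolynomial.X j) ^ (p i))

/-- The matrix `I − XA` over `R[[x₁,…,x_m]]`, where `X = diag(x₁,…,x_m)`. -/
def IXA (A : Matrix (Fin m) (Fin m) R) :
    Matrix (Fin m) (Fin m) (MvPowerSeries (Fin m) R) :=
  1 - Matrix.diagonal (fun i => (MvPowerSeries.X i : MvPowerSeries (Fin m) R)) *
    A.map ⇑(MvPowerSeries.C (σ := Fin m) (R := R))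

/-- `detDel B S T`: the determinant of `B` with the rows indexed by `S` and the columns
indexed by `T` deleted (remaining rows and columns taken in increasing order); junk value `0`
if the remaining row and column sets have different sizes. -/
def detDel {α : Type*} [CommRing α] (B : Matrix (Fin m) (Fin m) α)
    (S T : Finset (Fin m)) : α :=
  if h : Sᶜ.card = Tᶜ.card then
    Matrix.det (Matrix.of fun a b : Fin (Tᶜ.card) =>
      B ((Sᶜ.orderIsoOfFin h a : Fin m)) ((Tᶜ.orderIsoOfFin rfl b : Fin m)))
  else 0

/-- The multiset `ℳ` of all `i` with `d i < 0`, each appearing `−d i` times. -/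
def negMultiset (d : Fin m → ℤ) : Multiset (Fin m) :=
  ∑ i : Fin m, Multiset.replicate (-(d i)).toNat i

/-- The multiset `𝒩` of all `i` with `d i > 0`, each appearing `d i` times. -/
def posMultiset (d : Fin m → ℤ) : Multiset (Fin m) :=
  ∑ i : Fin m, Multiset.replicate (d i).toNat i

/-- The generating function `F_A(d)`. -/
def Fs (A : Matrix (Fin m) (Fin m) R) (d : Fin m → ℤ) : MvPowerSeries (Fin m) R :=
  fun p => if ∀ i, d i ≤ p i then
    Gcoef A p (Finsupp.equivFunOnFinite.symm fun i => ((p i : ℤ) - d i).toNat) else 0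

lemma coeff_Fs (A : Matrix (Fin m) (Fin m) R) (d : Fin m → ℤ) (p : Fin m →₀ ℕ) :
    MvPowerSeries.coeff p (Fs A d) = if ∀ i, d i ≤ p i then
      Gcoef A p (Finsupp.equivFunOnFinite.symm fun i => ((p i : ℤ) - d i).toNat) else 0 := rfl

lemma Gcoef_succ (A : Matrix (Fin m) (Fin m) R) (p r : Fin m →₀ ℕ) (i : Fin m) :
    Gcoef A (p + Finsupp.single i 1) r =
      ∑ j, A i j * (if r j ≠ 0 then Gcoef A p (r - Finsupp.single j 1) else 0) := by
  unfold Gcoef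
  have h : (∏ k, (∑ j, MvPolynomial.C (A k j) * MvPolynomial.X j) ^
      ((p + Finsupp.single i 1 : Fin m →₀ ℕ) k) : MvPolynomial (Fin m) R) =
      (∑ j, MvPolynomial.C (A i j) * MvPolynomial.X j) *
      ∏ k, (∑ j, MvPolynomial.C (A k j) * MvPolynomial.X j) ^ (p k) := by
    simp only [Finsupp.add_apply, pow_add, Finset.prod_mul_distrib]
    rw [mul_comm]
    congr 1
    rw [Finset.prod_eq_single i]
    · simp
    · intro b _ hb
      simp [Finsupp.single_apply, hb.symm]
    · simp
  rw [h, Finset.sum_mul, MvPolynomial.coeff_sum]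
  refine Finset.sum_congr rfl fun j _ => ?_
  rw [mul_assoc, MvPolynomial.coeff_C_mul, MvPolynomial.coeff_X_mul']
  simp only [Finsupp.mem_support_iff]

/-- `A` with rows in `T` replaced by zero. -/
def zr (A : Matrix (Fin m) (Fin m) R) (T : Finset (Fin m)) : Matrix (Fin m) (Fin m) R :=
  Matrix.of fun i j => if i ∈ T then 0 else A i j

lemma Gcoef_zr_pos (A : Matrix (Fin m) (Fin m) R) (T : Finset (Fin m)) (p r : Fin m →₀ ℕ)
    (i : Fin m) (hi : i ∈ T) (hp : p i ≠ 0) : Gcoef (zr A T) p r = 0 := by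
  unfold Gcoef
  rw [Finset.prod_eq_zero (Finset.mem_univ i), MvPolynomial.coeff_zero]
  simp [zr, hi, hp]

lemma Gcoef_zr_insert (A : Matrix (Fin m) (Fin m) R) (T : Finset (Fin m)) (p r : Fin m →₀ ℕ)
    (i : Fin m) (hp : p i = 0) : Gcoef (zr A (insert i T)) p r = Gcoef (zr A T) p r := by
  unfold Gcoef
  congr 1
  refine Finset.prod_congr rfl fun k _ => ?_
  by_cases hk : k = i
  · subst hk; simp [hp]
  · simp [zr, hk]

lemma zr_empty (A : Matrix (Fin m) (Fin m) R) : zr A ∅ = A := by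
  ext; simp [zr]

lemma Fs_rec (A : Matrix (Fin m) (Fin m) R) (T : Finset (Fin m)) (d : Fin m → ℤ)
    (i : Fin m) (hi : i ∉ T) :
    Fs (zr A T) d = Fs (zr A (insert i T)) d + ∑ j, MvPowerSeries.X i *
      MvPowerSeries.C (A i j) * Fs (zr A T) (d - Pi.single i 1 + Pi.single j 1) := by
  ext p
  rw [map_add, map_sum]
  simp only [mul_assoc, MvPowerSeries.X_def, MvPowerSeries.coeff_monomial_mul, one_mul,
    MvPowerSeries.coeff_C_mul]
  by_cases hp : p i = 0
  · have h1 : ¬ (Finsupp.single i 1 ≤ p) := by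
      intro h; have := h i; simp at this; omega
    simp only [h1, if_false, Finset.sum_const_zero, add_zero, coeff_Fs]
    rw [Gcoef_zr_insert _ _ _ _ _ hp]
  · have h1 : (Finsupp.single i 1 ≤ p) := by
      rw [Finsupp.single_le_iff]; omega
    obtain ⟨q, rfl⟩ : ∃ q, p = q + Finsupp.single i 1 := ⟨p - Finsupp.single i 1, by
      rw [tsub_add_cancel_of_le h1]⟩
    simp only [h1, if_true, coeff_Fs]
    rw [Gcoef_zr_pos A (insert i T) _ _ i (by simp) hp]
    simp only [ite_self, zero_add, add_tsub_cancel_right]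
    have key : ∀ j k, (d - Pi.single i 1 + Pi.single j 1 : Fin m → ℤ) k ≤ (q k : ℤ) ↔
        d k + (Pi.single j 1 : Fin m → ℤ) k ≤ ((q + Finsupp.single i 1 : Fin m →₀ ℕ) k : ℕ) := by
      intro j k
      by_cases h : k = i
      · subst h; simp; omega
      · simp [h, Ne.symm h, Finsupp.single_apply]
    split_ifs with h
    · rw [Gcoef_succ]
      refine Finset.sum_congr rfl fun j _ => ?_
      have hA : zr A T i j = A i j := by simp [zr, hi]
      rw [hA]
      congr 1
      have hj := h j
      simp only [key]
      by_cases hr : d j + 1 ≤ ((q + Finsupp.single i 1 : Fin m →₀ ℕ) j : ℕ)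
      · rw [if_pos, if_pos]
        · congr 1
          ext k
          have hk := h k
          by_cases h1 : k = i <;> by_cases h2 : k = j <;>
            simp [h1, h2, Finsupp.single_apply, Pi.single_apply, eq_comm] <;> 
            (try split_ifs) <;> (try subst h1) <;> (try subst h2) <;> simp_all <;> omega
        · intro k
          by_cases h2 : k = j
          · subst h2; simpa using hr
          · simpa [h2] using h k
        · simp at hr ⊢; omega
      · rw [if_neg, if_neg]
        · intro h'; apply hr; simpa using h' j
        · simp at hr ⊢; omega
    · symm
      refine Finset.sum_eq_zero fun j _ => ?_
      rw [if_neg, mul_zero]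
      intro h'
      apply h
      intro k
      have := (key j k).1 (h' k)
      have h3 : 0 ≤ (Pi.single j 1 : Fin m → ℤ) k := by
        rw [Pi.single_apply]; split_ifs <;> simp
      omega

lemma Fs_zr_pos (A : Matrix (Fin m) (Fin m) R) (T : Finset (Fin m)) (d : Fin m → ℤ)
    (i : Fin m) (hi : i ∈ T) (hd : 0 < d i) : Fs (zr A T) d = 0 := by
  ext p
  rw [coeff_Fs, map_zero]
  split_ifs with h
  · exact Gcoef_zr_pos _ _ _ _ i hi (by have := h i; omega)
  · rfl

lemma IXA_apply (A : Matrix (Fin m) (Fin m) R) (i j : Fin m) :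
    IXA A i j = (if i = j then 1 else 0) - MvPowerSeries.X i * MvPowerSeries.C (A i j) := by
  simp [IXA, Matrix.one_apply, Matrix.diagonal_mul]

lemma IXA_zr (A : Matrix (Fin m) (Fin m) R) (T : Finset (Fin m)) (i j : Fin m) :
    IXA (zr A T) i j = if i ∈ T then (if i = j then 1 else 0) else IXA A i j := by
  simp only [IXA_apply, zr, Matrix.of_apply]
  split_ifs <;> simp

lemma isUnit_det_IXA (A : Matrix (Fin m) (Fin m) R) : IsUnit (IXA A).det := by
  rw [MvPowerSeries.isUnit_iff_constantCoeff, RingHom.map_det]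
  have : (MvPowerSeries.constantCoeff (σ := Fin m) (R := R)).mapMatrix (IXA A) = 1 := by
    ext i j
    by_cases h : i = j <;> simp [IXA_apply, Matrix.one_apply, h]
  rw [this]; simp

/-- row relation -/
lemma IXA_row (A : Matrix (Fin m) (Fin m) R) (T : Finset (Fin m)) (c : Fin m → ℤ)
    (i : Fin m) (hi : i ∉ T) :
    ∑ j, IXA A i j * Fs (zr A T) (c + Pi.single j 1) =
      Fs (zr A (insert i T)) (c + Pi.single i 1) := by
  have h := Fs_rec A T (c + Pi.single i 1) i hi
  simp only [add_sub_cancel_right] at h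
  simp only [IXA_apply, sub_mul, Finset.sum_sub_distrib, ite_mul, one_mul, zero_mul,
    Finset.sum_ite_eq, Finset.mem_univ, if_true]
  rw [h]; ring

lemma macmahon_step (A : Matrix (Fin m) (Fin m) R) (T : Finset (Fin m)) (i : Fin m) (hi : i ∉ T) :
    (IXA (zr A T)).det * Fs (zr A T) 0 =
      (IXA (zr A (insert i T))).det * Fs (zr A (insert i T)) 0 := by
  have hv : (IXA (zr A T)).mulVec (fun j => Fs (zr A T) (-Pi.single i 1 + Pi.single j 1)) =
      Pi.single i (Fs (zr A (insert i T)) 0) := by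
    ext1 k
    simp only [Matrix.mulVec, dotProduct]
    by_cases hk : k ∈ T
    · have hki : k ≠ i := by rintro rfl; exact hi hk
      simp only [IXA_zr, hk, if_true, ite_mul, one_mul, zero_mul, Finset.sum_ite_eq,
        Finset.mem_univ]
      rw [Fs_zr_pos A T _ k hk (by simp [hki])]
      simp [hki]
    · simp only [IXA_zr, hk, if_false]
      rw [IXA_row A T _ k hk]
      by_cases hki : k = i
      · subst hki; simp
      · rw [Fs_zr_pos A _ _ k (by simp) (by simp [hki])]
        simp [hki]
  have h2 := congrArg (fun v => (IXA (zr A T)).adjugate.mulVec v i) hv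
  simp only [Matrix.mulVec_mulVec, Matrix.adjugate_mul, Matrix.smul_mulVec, Matrix.one_mulVec,
    Pi.smul_apply, smul_eq_mul, neg_add_cancel, Matrix.mulVec_single] at h2
  rw [h2]
  rw [op_smul_eq_mul, Matrix.col_apply, Matrix.adjugate_apply]
  congr 2
  ext1 a b
  rw [IXA_zr, Matrix.updateRow_apply]
  by_cases ha : a = i
  · subst ha; simp [Pi.single_apply, eq_comm]
  · simp [ha, IXA_zr]

lemma macmahon_aux (A : Matrix (Fin m) (Fin m) R) (T : Finset (Fin m)) :
    (IXA A).det * Fs A 0 = (IXA (zr A T)).det * Fs (zr A T) 0 := by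
  induction T using Finset.induction_on with
  | empty => rw [zr_empty]
  | insert i T hi ih => rw [ih, macmahon_step A T i hi]

lemma macmahon (A : Matrix (Fin m) (Fin m) R) : (IXA A).det * Fs A 0 = 1 := by
  rw [macmahon_aux A Finset.univ]
  have h1 : IXA (zr A Finset.univ) = 1 := by
    ext1 a b; rw [IXA_zr]; simp [Matrix.one_apply]
  rw [h1, Matrix.det_one, one_mul]
  ext p
  rw [coeff_Fs, if_pos (by simp), MvPowerSeries.coeff_one]
  split_ifs with hp
  · subst hp
    simp [Gcoef, MvPolynomial.coeff_one, Finsupp.ext_iff]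
  · obtain ⟨i, hi⟩ : ∃ i, p i ≠ 0 := by
      by_contra! h; exact hp (Finsupp.ext h)
    exact Gcoef_zr_pos _ _ _ _ i (Finset.mem_univ _) hi

/-- main recursion -/
lemma Fs_main (A : Matrix (Fin m) (Fin m) R) (T : Finset (Fin m)) (c : Fin m → ℤ)
    (hT : ∀ i, i ∉ T → 0 ≤ c i) (n : Fin m) :
    Fs A (c + Pi.single n 1) = ∑ i ∈ T, (IXA (zr A T)).adjugate n i *
      Ring.inverse (IXA (zr A T)).det * Fs A (c + Pi.single i 1) := by
  have hv : (IXA (zr A T)).mulVec (fun j => Fs A (c + Pi.single j 1)) =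
      fun i => if i ∈ T then Fs A (c + Pi.single i 1) else 0 := by
    ext1 k
    simp only [Matrix.mulVec, dotProduct]
    by_cases hk : k ∈ T
    · simp [IXA_zr, hk]
    · simp only [IXA_zr, hk, if_false]
      have := IXA_row A ∅ c k (by simp)
      rw [zr_empty] at this
      rw [this]
      exact Fs_zr_pos _ _ _ k (by simp) (by have := hT k hk; simp; omega)
  have h2 := congrArg (fun v => (IXA (zr A T)).adjugate.mulVec v n) hv
  simp only [Matrix.mulVec_mulVec, Matrix.adjugate_mul, Matrix.smul_mulVec, Matrix.one_mulVec,
    Pi.smul_apply, smul_eq_mul] at h2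
  simp only [Matrix.mulVec, dotProduct, mul_ite, mul_zero, Finset.sum_ite_mem,
    Finset.univ_inter] at h2
  have hu := Ring.inverse_mul_cancel _ (isUnit_det_IXA (zr A T))
  calc _ = Ring.inverse (IXA (zr A T)).det * ((IXA (zr A T)).det * Fs A (c + Pi.single n 1)) := by
        rw [← mul_assoc, hu, one_mul]
    _ = _ := by
        rw [h2, Finset.mul_sum]
        refine Finset.sum_congr rfl fun i _ => ?_
        ring

/-- `B` with rows in `T` replaced by identity rows. -/
def idr {α : Type*} [CommRing α] (B : Matrix (Fin m) (Fin m) α) (T : Finset (Fin m)) :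
    Matrix (Fin m) (Fin m) α :=
  Matrix.of fun i j => if i ∈ T then (if i = j then 1 else 0) else B i j

lemma detDel_eq {α : Type*} [CommRing α] (B : Matrix (Fin m) (Fin m) α)
    (S T : Finset (Fin m)) (k : ℕ) (hS : Sᶜ.card = k) (hT : Tᶜ.card = k) :
    detDel B S T = Matrix.det (Matrix.of fun a b : Fin k =>
      B (Sᶜ.orderEmbOfFin hS a) (Tᶜ.orderEmbOfFin hT b)) := by
  subst hT
  unfold detDel
  rw [dif_pos hS]
  rfl

lemma detDel_self {α : Type*} [CommRing α] (B : Matrix (Fin m) (Fin m) α)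
    (T : Finset (Fin m)) : detDel B T T = (idr B T).det := by
  rw [Matrix.twoBlockTriangular_det' (idr B T) (fun i => i ∈ T)]
  · have h1 : (Matrix.toSquareBlockProp (idr B T) (fun i => i ∈ T)) = 1 := by
      ext a b
      have ha : (a : Fin m) ∈ T := a.2
      rw [Matrix.one_apply]
      simp only [Matrix.toSquareBlockProp, Matrix.toBlock_apply, idr, Matrix.of_apply, ha, if_true, Subtype.ext_iff]
    have h0 : (Matrix.toSquareBlockProp (idr B T) (fun i => i ∈ T)).det = 1 := by
      rw [h1]; convert Matrix.det_one
    have h0' : ∀ x y : α, x = 1 → x * y = y := by rintro x y rfl; exact one_mul y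
    refine Eq.symm ((h0' _ _ (by convert h0)).trans ?_)
    symm
    let e : Fin (Tᶜ.card) ≃ {i : Fin m // ¬ i ∈ T} :=
      (Tᶜ.orderIsoOfFin rfl).toEquiv.trans (Equiv.subtypeEquivRight (by simp))
    rw [← Matrix.det_submatrix_equiv_self e]
    unfold detDel
    rw [dif_pos rfl]
    congr 1
    ext a b
    have : ((Tᶜ.orderIsoOfFin rfl a : Fin m)) ∉ T := by
      exact Finset.mem_compl.1 (Tᶜ.orderIsoOfFin rfl a).2
    simp only [Matrix.of_apply, Matrix.submatrix_apply, Matrix.toSquareBlockProp, idr, e]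
    simp only [Matrix.of_apply, Equiv.trans_apply, Equiv.subtypeEquivRight_apply_coe]
    exact (if_neg this).symm
  · intro i hi j hj
    have : i ≠ j := by rintro rfl; exact hj hi
    simp [idr, hi, this]

lemma orderEmb_insert (W U : Finset (Fin m)) (x : Fin m) (hx : x ∉ W) (hU : U = insert x W)
    (k : ℕ) (hW : W.card = k) (h : U.card = k + 1) :
    ∃ p : Fin (k + 1), (p : ℕ) = (W.filter (· < x)).card ∧ U.orderEmbOfFin h p = x ∧
      ∀ a, U.orderEmbOfFin h (p.succAbove a) = W.orderEmbOfFin hW a := by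
  have hxU : x ∈ U := by simp [hU]
  obtain ⟨p, hp⟩ : ∃ p, U.orderEmbOfFin h p = x := by
    have : x ∈ Set.range (U.orderEmbOfFin h) := by
      rw [Finset.range_orderEmbOfFin]; exact hxU
    exact this
  refine ⟨p, ?_, hp, ?_⟩
  · have : W.filter (· < x) = (Finset.Iio p).map (U.orderEmbOfFin h).toEmbedding := by
      ext w
      simp only [Finset.mem_filter, Finset.mem_map, Finset.mem_Iio]
      constructor
      · rintro ⟨h1, h2⟩
        have : w ∈ Set.range (U.orderEmbOfFin h) := by
          rw [Finset.range_orderEmbOfFin]; simp [hU, h1]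
        obtain ⟨a, rfl⟩ := this
        refine ⟨a, ?_, rfl⟩
        rw [← hp] at h2
        exact (U.orderEmbOfFin h).lt_iff_lt.1 h2
      · rintro ⟨a, ha, rfl⟩
        have h2 : U.orderEmbOfFin h a < x := by
          rw [← hp]; exact (U.orderEmbOfFin h).lt_iff_lt.2 ha
        have h3 : U.orderEmbOfFin h a ∈ U := Finset.orderEmbOfFin_mem _ _ _
        refine ⟨?_, h2⟩
        replace h3 := Finset.mem_insert.1 (hU.subset h3)
        rcases h3 with h3 | h3
        · exact absurd h3 h2.ne
        · exact h3
    rw [this, Finset.card_map, Fin.card_Iio]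
  · intro a
    refine congrFun (Finset.orderEmbOfFin_unique hW (f := fun a => U.orderEmbOfFin h (p.succAbove a))
      ?_ ?_) a
    · intro b
      have h3 : U.orderEmbOfFin h (p.succAbove b) ∈ U := Finset.orderEmbOfFin_mem _ _ _
      replace h3 := Finset.mem_insert.1 (hU.subset h3)
      rcases h3 with h3 | h3
      · rw [← hp] at h3
        exact absurd ((U.orderEmbOfFin h).injective h3) (Fin.succAbove_ne p b)
      · exact h3
    · exact (U.orderEmbOfFin h).strictMono.comp (Fin.strictMono_succAbove p)

lemma count_aux (T W : Finset (Fin m)) (a b : Fin m) (hab : a < b)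
    (hTW : Disjoint T W) (haW : a ∉ W)
    (hc : ∀ x, a < x → x < b → x ∈ T ∨ x ∈ W) :
    (W.filter (· < b)).card + (T.filter fun x => a < x ∧ x < b).card + (a : ℕ) + 1 =
      (W.filter (· < a)).card + b := by
  have h1 : (W.filter (· < b)).card = (W.filter (· < a)).card +
      (W.filter fun x => a < x ∧ x < b).card := by
    rw [← Finset.card_union_of_disjoint]
    · congr 1
      ext x
      simp only [Finset.mem_filter, Finset.mem_union]
      constructor
      · rintro ⟨hx, h⟩
        rcases lt_trichotomy x a with h2 | h2 | h2
        · exact Or.inl ⟨hx, h2⟩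
        · subst h2; exact absurd hx haW
        · exact Or.inr ⟨hx, h2, h⟩
      · rintro (⟨hx, h⟩ | ⟨hx, h, h'⟩)
        · exact ⟨hx, h.trans hab⟩
        · exact ⟨hx, h'⟩
    · rw [Finset.disjoint_left]
      intro x hx hx'
      simp only [Finset.mem_filter] at hx hx'
      exact lt_asymm hx.2 hx'.2.1
  have h2 : (T.filter fun x => a < x ∧ x < b).card + (W.filter fun x => a < x ∧ x < b).card =
      (Finset.Ioo a b).card := by
    rw [← Finset.card_union_of_disjoint]
    · congr 1
      ext x
      simp only [Finset.mem_filter, Finset.mem_union, Finset.mem_Ioo]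
      constructor
      · tauto
      · rintro ⟨h, h'⟩
        rcases hc x h h' with h3 | h3
        · exact Or.inl ⟨h3, h, h'⟩
        · exact Or.inr ⟨h3, h, h'⟩
    · exact Finset.disjoint_filter_filter hTW
  rw [Fin.card_Ioo] at h2
  have : (a : ℕ) < b := hab
  omega

lemma adj_eq {α : Type*} [CommRing α] (B : Matrix (Fin m) (Fin m) α)
    (T : Finset (Fin m)) (i n : Fin m) (hi : i ∈ T) (hn : n ∉ T) :
    (idr B T).adjugate n i =
      (-1) ^ ((i : ℕ) + n + (T.filter fun x => i ⊓ n < x ∧ x < i ⊔ n).card) *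
        detDel B T (insert n (T.erase i)) := by
  have hin : i ≠ n := by rintro rfl; exact hn hi
  rw [Matrix.adjugate_apply]
  set C := B.submatrix id (Equiv.swap i n) with hC
  have h1 : ((idr B T).updateRow i (Pi.single n 1)).submatrix id (Equiv.swap i n) = idr C T := by
    ext a b
    simp only [Matrix.submatrix_apply, id, Matrix.updateRow_apply, idr, Matrix.of_apply, hC]
    by_cases ha : a = i
    · subst ha
      simp only [if_true, hi, Pi.single_apply]
      congr 1
      rw [Equiv.swap_apply_eq_iff, Equiv.swap_apply_right]
      exact propext eq_comm
    · simp only [ha, if_false]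
      by_cases haT : a ∈ T
      · have han : a ≠ n := by rintro rfl; exact hn haT
        simp only [haT, if_true]
        congr 1
        rw [@eq_comm _ a ((Equiv.swap i n) b), Equiv.swap_apply_eq_iff,
          Equiv.swap_apply_of_ne_of_ne ha han]
        exact propext eq_comm
      · simp only [haT, if_false]
  have h2 := Matrix.det_permute' (Equiv.swap i n) ((idr B T).updateRow i (Pi.single n 1))
  rw [h1, Equiv.Perm.sign_swap hin, ← detDel_self] at h2
  have h3 : ((idr B T).updateRow i (Pi.single n 1)).det = - detDel C T T := by
    rw [h2]; simp
  rw [h3]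
  set W := Tᶜ.erase n with hW
  obtain ⟨k, hk⟩ : ∃ k, W.card = k := ⟨_, rfl⟩
  have hnW : n ∉ W := by simp [hW]
  have hiW : i ∉ W := by simp [hW, hi]
  have hU : Tᶜ = insert n W := by rw [hW, Finset.insert_erase (by simpa using hn)]
  have hV : (insert n (T.erase i))ᶜ = insert i W := by
    ext x
    simp only [hW, Finset.mem_compl, Finset.mem_insert, Finset.mem_erase]
    by_cases hx : x = i
    · subst hx; simp [hin]
    · simp [hx]
  have hUk : Tᶜ.card = k + 1 := by rw [hU, Finset.card_insert_of_notMem hnW, hk]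
  have hVk : (insert n (T.erase i))ᶜ.card = k + 1 := by
    rw [hV, Finset.card_insert_of_notMem hiW, hk]
  obtain ⟨p, hp1, hp2, hp3⟩ := orderEmb_insert W _ n hnW hU k hk hUk
  obtain ⟨q, hq1, hq2, hq3⟩ := orderEmb_insert W _ i hiW hV k hk hVk
  rw [detDel_eq C T T _ hUk hUk, detDel_eq B T _ _ hUk hVk]
  rw [Matrix.det_succ_column _ p, Matrix.det_succ_column _ q, Finset.mul_sum,
    ← Finset.sum_neg_distrib]
  refine Finset.sum_congr rfl fun a _ => ?_
  have hsub : (Matrix.of fun a b : Fin (k + 1) =>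
      C (Tᶜ.orderEmbOfFin hUk a) (Tᶜ.orderEmbOfFin hUk b)).submatrix a.succAbove p.succAbove =
      (Matrix.of fun a b : Fin (k + 1) => B (Tᶜ.orderEmbOfFin hUk a)
        ((insert n (T.erase i))ᶜ.orderEmbOfFin hVk b)).submatrix a.succAbove q.succAbove := by
    ext b c
    simp only [Matrix.submatrix_apply, Matrix.of_apply, hp3, hq3, hC, id]
    have hw := Finset.orderEmbOfFin_mem W hk c
    rw [Equiv.swap_apply_of_ne_of_ne]
    · intro h; rw [h] at hw; exact hiW hw
    · intro h; rw [h] at hw; exact hnW hw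
  rw [hsub]
  simp only [Matrix.of_apply, hp2, hq2, hC, Matrix.submatrix_apply, id, Equiv.swap_apply_right]
  have hdisj : Disjoint T W := by
    rw [Finset.disjoint_left]; intro x hx hx'
    simp [hW, hx] at hx'
  have hc : ∀ x, x ≠ n → x ∈ T ∨ x ∈ W := by
    intro x hx
    by_cases h : x ∈ T
    · exact Or.inl h
    · right; simp [hW, h, hx]
  have hsign : (-1 : α) ^ ((a : ℕ) + p) * (-1) =
      (-1) ^ ((i : ℕ) + n + (T.filter fun x => i ⊓ n < x ∧ x < i ⊔ n).card) *
        (-1) ^ ((a : ℕ) + q) := by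
    rw [← pow_succ, ← pow_add]
    rcases lt_or_gt_of_ne hin with h | h
    · rw [inf_eq_left.2 h.le, sup_eq_right.2 h.le]
      have := count_aux T W i n h hdisj hiW (fun x _ hx => hc x hx.ne)
      rw [neg_one_pow_eq_pow_mod_two, neg_one_pow_eq_pow_mod_two (n := _ + _ + _ + _)]
      congr 1
      omega
    · rw [inf_eq_right.2 h.le, sup_eq_left.2 h.le]
      have := count_aux T W n i h hdisj hnW (fun x hx _ => hc x hx.ne')
      rw [neg_one_pow_eq_pow_mod_two, neg_one_pow_eq_pow_mod_two (n := _ + _ + _ + _)]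
      congr 1
      omega
  rw [← mul_assoc, ← mul_assoc, ← hsign]
  ring

lemma count_neg (d : Fin m → ℤ) (i : Fin m) : (negMultiset d).count i = (-(d i)).toNat := by
  simp [negMultiset, Multiset.count_sum', Multiset.count_replicate]

lemma count_pos' (d : Fin m → ℤ) (i : Fin m) : (posMultiset d).count i = (d i).toNat := by
  simp [posMultiset, Multiset.count_sum', Multiset.count_replicate]

lemma mem_neg (d : Fin m → ℤ) (i : Fin m) : i ∈ negMultiset d ↔ d i < 0 := by
  rw [← Multiset.count_pos, count_neg]; omega

lemma mem_pos (d : Fin m → ℤ) (i : Fin m) : i ∈ posMultiset d ↔ 0 < d i := by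
  rw [← Multiset.count_pos, count_pos']; omega

lemma card_pos_eq_neg (d : Fin m → ℤ) (hd : ∑ i, d i = 0) :
    Multiset.card (posMultiset d) = Multiset.card (negMultiset d) := by
  simp only [posMultiset, negMultiset, Multiset.card_sum, Multiset.card_replicate]
  have h : ∑ i, (((d i).toNat : ℤ) - ((-(d i)).toNat : ℤ)) = 0 := by
    rw [← hd]; exact Finset.sum_congr rfl fun i _ => by omega
  rw [Finset.sum_sub_distrib] at h
  have : ((∑ i, (d i).toNat : ℕ) : ℤ) = ((∑ i, (-(d i)).toNat : ℕ) : ℤ) := by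
    push_cast; push_cast at h; linarith
  exact_mod_cast this

lemma mem_lists' (s : Multiset (Fin m)) (l : List (Fin m)) :
    l ∈ (Multiset.lists s).toFinset ↔ (l : Multiset (Fin m)) = s := by
  rw [Multiset.mem_toFinset, Multiset.mem_lists_iff, eq_comm]; rfl

lemma sum_lists {M : Type*} [AddCommMonoid M] (s : Multiset (Fin m)) (hs : s ≠ 0)
    (f : List (Fin m) → M) :
    ∑ l ∈ (Multiset.lists s).toFinset, f l =
      ∑ i ∈ s.toFinset, ∑ l ∈ (Multiset.lists (s.erase i)).toFinset, f (l ++ [i]) := by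
  rw [Finset.sum_sigma']
  symm
  refine Finset.sum_bij (fun x _ => x.2 ++ [x.1]) ?_ ?_ ?_ ?_
  · rintro ⟨i, l⟩ h
    rw [Finset.mem_sigma, mem_lists', Multiset.mem_toFinset] at h
    rw [mem_lists']
    dsimp only at h ⊢
    rw [← Multiset.coe_add, h.2, Multiset.coe_singleton, add_comm, Multiset.singleton_add,
      Multiset.cons_erase h.1]
  · rintro ⟨i, l⟩ _ ⟨i', l'⟩ _ h
    obtain ⟨h1, h2⟩ := List.append_inj' h rfl
    simp at h1 h2
    subst h1; subst h2; rfl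
  · intro l hl
    rw [mem_lists'] at hl
    rcases List.eq_nil_or_concat l with h | ⟨l', i, h⟩
    · subst h; exact absurd hl.symm hs
    · subst h
      refine ⟨⟨i, l'⟩, ?_, by simp⟩
      simp only [List.concat_eq_append, ← Multiset.coe_add, Multiset.coe_singleton] at hl
      rw [add_comm, Multiset.singleton_add] at hl
      rw [Finset.mem_sigma, mem_lists', Multiset.mem_toFinset]
      rw [← hl]
      simp
  · intros; rfl

lemma sum_getD (l : List (Fin m)) (z : Fin m) (f : Fin m → ℕ) :
    (l.map f).sum = ∑ k ∈ Finset.range l.length, f (l.getD k z) := by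
  induction l with
  | nil => simp
  | cons a l ih =>
    rw [List.map_cons, List.sum_cons, List.length_cons, Finset.sum_range_succ', ih, add_comm]
    simp

/-- generating function of first passage walks -/
def ratio (A : Matrix (Fin m) (Fin m) R) (T : Finset (Fin m)) (n i : Fin m) :
    MvPowerSeries (Fin m) R :=
  (IXA (zr A T)).adjugate n i * Ring.inverse (IXA (zr A T)).det

lemma main_aux (A : Matrix (Fin m) (Fin m) R) (z : Fin m) (NL : List (Fin m)) :
    ∀ (d : Fin m → ℤ), ∑ i, d i = 0 → (NL : Multiset (Fin m)) = posMultiset d →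
    Fs A d = Ring.inverse (IXA A).det * ∑ l ∈ (Multiset.lists (negMultiset d)).toFinset,
      ∏ k ∈ Finset.range NL.length,
        ratio A (l.take (k + 1)).toFinset (NL.getD k z) (l.getD k z) := by
  induction NL using List.reverseRecOn with
  | nil =>
    intro d hd hN
    have h0 : negMultiset d = 0 := by
      rw [← Multiset.card_eq_zero, ← card_pos_eq_neg d hd, ← hN]; rfl
    have hd0 : d = 0 := by
      ext i
      have h1 := count_neg d i
      have h2 := count_pos' d i
      rw [h0] at h1
      rw [← hN] at h2
      simp at h1 h2
      simp; omega
    have hl : (Multiset.lists (negMultiset d)).toFinset = {[]} := by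
      ext l; rw [mem_lists', h0]; simp
    rw [hl]
    simp only [Finset.sum_singleton, List.length_nil, Finset.range_zero, Finset.prod_empty, mul_one]
    rw [hd0]
    calc Fs A 0 = Ring.inverse (IXA A).det * ((IXA A).det * Fs A 0) := by
          rw [← mul_assoc, Ring.inverse_mul_cancel _ (isUnit_det_IXA A), one_mul]
      _ = _ := by rw [macmahon, mul_one]
  | append_singleton NL n ih =>
    intro d hd hN
    have hcard := card_pos_eq_neg d hd
    rw [← hN] at hcard
    simp only [Multiset.coe_card, List.length_append, List.length_singleton] at hcard
    have hs : negMultiset d ≠ 0 := by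
      intro h; rw [h] at hcard; simp at hcard
    have hn : 0 < d n := by
      rw [← mem_pos, ← hN]; simp
    have hdc : d = (d - Pi.single n 1) + Pi.single n 1 := by simp
    rw [sum_lists _ hs]
    have h1 := Fs_main A (negMultiset d).toFinset (d - Pi.single n 1) (by
      intro i hi
      rw [Multiset.mem_toFinset, mem_neg] at hi
      by_cases h : i = n
      · subst h; simp; omega
      · simp [h]; omega) n
    rw [← hdc] at h1
    rw [h1, Finset.mul_sum]
    refine Finset.sum_congr rfl fun i hi => ?_
    rw [Multiset.mem_toFinset] at hi
    have hi' := (mem_neg d i).1 hi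
    have hin : i ≠ n := by rintro rfl; omega
    have hneg : negMultiset (d - Pi.single n 1 + Pi.single i 1) = (negMultiset d).erase i := by
      ext j
      rw [count_neg]
      by_cases hj : j = i
      · subst hj
        rw [Multiset.count_erase_self, count_neg]; simp [hin]; omega
      · rw [Multiset.count_erase_of_ne hj, count_neg]
        by_cases hjn : j = n
        · subst hjn; simp [hj]; omega
        · simp [hj, hjn]
    have hpos : (NL : Multiset (Fin m)) = posMultiset (d - Pi.single n 1 + Pi.single i 1) := by
      ext j
      have h2 := congrArg (Multiset.count j) hN
      rw [count_pos'] at h2 ⊢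
      rw [← Multiset.coe_add, Multiset.count_add, Multiset.coe_singleton,
        Multiset.count_singleton] at h2
      by_cases hj : j = i
      · subst hj; simp [hin] at h2 ⊢; omega
      · by_cases hjn : j = n
        · subst hjn; simp [hj] at h2 ⊢; omega
        · simp [hj, hjn] at h2 ⊢; omega
    have hsum : ∑ j, (d - Pi.single n 1 + Pi.single i 1 : Fin m → ℤ) j = 0 := by
      simp [Finset.sum_add_distrib, Finset.sum_sub_distrib, hd]
    rw [ih _ hsum hpos, hneg, Finset.mul_sum, Finset.mul_sum, Finset.mul_sum]
    refine Finset.sum_congr rfl fun l hl => ?_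
    rw [mem_lists'] at hl
    have hll : l.length = NL.length := by
      have := congrArg Multiset.card hl
      rw [Multiset.card_erase_of_mem hi] at this
      simp at this
      omega
    rw [List.length_append, List.length_singleton, Finset.prod_range_succ]
    have hfull : (l ++ [i]).take (NL.length + 1) = l ++ [i] := by
      rw [List.take_of_length_le]; simp [hll]
    have hT : (l ++ [i]).toFinset = (negMultiset d).toFinset := by
      rw [← Multiset.cons_erase hi, ← hl]
      ext x; simp [or_comm]
    rw [hfull, hT]
    have e1 : (NL ++ [n]).getD NL.length z = n := by simp
    have e2 : (l ++ [i]).getD NL.length z = i := by rw [← hll]; simp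
    rw [e1, e2]
    have e3 : ∏ k ∈ Finset.range NL.length, ratio A ((l ++ [i]).take (k + 1)).toFinset
        ((NL ++ [n]).getD k z) ((l ++ [i]).getD k z) = ∏ k ∈ Finset.range NL.length,
        ratio A (l.take (k + 1)).toFinset (NL.getD k z) (l.getD k z) := by
      refine Finset.prod_congr rfl fun k hk => ?_
      rw [Finset.mem_range] at hk
      rw [List.take_append_of_le_length (by omega), List.getD_append _ _ _ _ hk,
        List.getD_append _ _ _ _ (by omega)]
    rw [e3]
    unfold ratio
    ring

theorem generalized_macmahon (hm : 1 ≤ m)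
    (A : Matrix (Fin m) (Fin m) R)
    (d : Fin m → ℤ) (hd : ∑ i, d i = 0)
    (F : MvPowerSeries (Fin m) R)
    -- `F = Σ_{p = r + d} G(p;r) x^p`: the coefficient of `x^p` in `F` is `G(p;r)` when
    -- `p = r + d` for a nonnegative integer vector `r`, and `0` when no such `r` exists.
    (hF₁ : ∀ p r : Fin m →₀ ℕ, (∀ i, (p i : ℤ) = (r i : ℤ) + d i) →
      MvPowerSeries.coeff p F = Gcoef A p r)
    (hF₂ : ∀ p : Fin m →₀ ℕ, (∃ i, (p i : ℤ) < d i) →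
      MvPowerSeries.coeff p F = 0)
    -- `NL` is the weakly increasing list `N₁ ≤ N₂ ≤ ⋯ ≤ N_δ` enumerating `𝒩`.
    (NL : List (Fin m)) (hNL : NL.Pairwise (· ≤ ·))
    (hNL' : (NL : Multiset (Fin m)) = posMultiset d) :
    F = (-1 : MvPowerSeries (Fin m) R) ^
          ((((negMultiset d).map fun i => (i : ℕ) + 1).sum +
            ((posMultiset d).map fun i => (i : ℕ) + 1).sum)) *
        Ring.inverse (IXA A).det *
        ∑ᶠ l ∈ {l : List (Fin m) | (l : Multiset (Fin m)) = negMultiset d},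
          ∏ k ∈ Finset.range (Multiset.card (negMultiset d)),
            ((-1 : MvPowerSeries (Fin m) R) ^
                (((l.take k).toFinset.filter fun x =>
                    (l.getD k ⟨0, hm⟩) ⊓ (NL.getD k ⟨0, hm⟩) < x ∧
                      x < (l.getD k ⟨0, hm⟩) ⊔ (NL.getD k ⟨0, hm⟩)).card) *
              detDel (IXA A) ((l.take (k + 1)).toFinset)
                (insert (NL.getD k ⟨0, hm⟩)
                  (((l.take (k + 1)).toFinset).erase (l.getD k ⟨0, hm⟩))) *
              Ring.inverse
                (detDel (IXA A) ((l.take (k + 1)).toFinset) ((l.take (k + 1)).toFinset))) := by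
  have hFF : F = Fs A d := by
    ext p
    rw [coeff_Fs]
    split_ifs with h
    · refine hF₁ p _ fun i => ?_
      have := h i
      simp only [Finsupp.equivFunOnFinite_symm_apply_apply]
      omega
    · apply hF₂
      push Not at h
      exact h
  have hset : {l : List (Fin m) | (l : Multiset (Fin m)) = negMultiset d} =
      ((Multiset.lists (negMultiset d)).toFinset : Set (List (Fin m))) := by
    ext l; rw [Finset.mem_coe, mem_lists']; rfl
  have hlen : NL.length = Multiset.card (negMultiset d) := by
    rw [← card_pos_eq_neg d hd, ← hNL', Multiset.coe_card]
  rw [hset, finsum_mem_coe_finset, hFF, main_aux A ⟨0, hm⟩ NL d hd hNL', mul_comm (_ ^ _), mul_assoc,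
    hlen]
  refine congrArg (fun y => Ring.inverse (IXA A).det * y) ?_
  rw [Finset.mul_sum]
  refine Finset.sum_congr rfl fun l hl => ?_
  rw [mem_lists'] at hl
  have hll : l.length = Multiset.card (negMultiset d) := by rw [← hl, Multiset.coe_card]
  have hs : (((negMultiset d).map fun i => (i : ℕ) + 1).sum +
      ((posMultiset d).map fun i => (i : ℕ) + 1).sum) =
      ∑ k ∈ Finset.range (Multiset.card (negMultiset d)),
        (((l.getD k ⟨0, hm⟩ : Fin m) : ℕ) + 1 + ((NL.getD k ⟨0, hm⟩ : Fin m) + 1)) := by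
    simp only [Multiset.bind_def, Multiset.pure_def, Multiset.bind_singleton, Multiset.map_map,
      Function.comp_apply]
    rw [Finset.sum_add_distrib, ← hl, ← hNL', Multiset.map_coe, Multiset.map_coe, Multiset.sum_coe,
      Multiset.sum_coe, Multiset.coe_card, sum_getD l ⟨0, hm⟩ (fun i => (i : ℕ) + 1),
      sum_getD NL ⟨0, hm⟩ (fun i => (i : ℕ) + 1), hlen, hll]
  rw [hs, ← Finset.prod_pow_eq_pow_sum, ← Finset.prod_mul_distrib]
  refine Finset.prod_congr rfl fun k hk => ?_
  rw [Finset.mem_range] at hk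
  have hkl : k < l.length := by omega
  have hkN : k < NL.length := by omega
  unfold ratio
  have hidr : ∀ T, IXA (zr A T) = idr (IXA A) T := by
    intro T; ext1 a b; rw [IXA_zr]; rfl
  have hmem : l.getD k ⟨0, hm⟩ ∈ (l.take (k + 1)).toFinset := by
    rw [List.mem_toFinset, List.getD_eq_getElem _ _ hkl, List.take_succ_eq_append_getElem hkl]
    exact List.mem_append_right _ (List.mem_singleton.2 rfl)
  have hnm : NL.getD k ⟨0, hm⟩ ∉ (l.take (k + 1)).toFinset := by
    rw [List.mem_toFinset, List.getD_eq_getElem _ _ hkN]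
    intro h
    have h1 : NL[k] ∈ negMultiset d := by
      rw [← hl, Multiset.mem_coe]; exact List.mem_of_mem_take h
    have h2 : NL[k] ∈ posMultiset d := by
      rw [← hNL', Multiset.mem_coe]; exact List.getElem_mem hkN
    rw [mem_neg] at h1
    rw [mem_pos] at h2
    omega
  rw [hidr, adj_eq _ _ _ _ hmem hnm, ← detDel_self]
  have hfil : ((l.take (k + 1)).toFinset.filter fun x =>
        (l.getD k ⟨0, hm⟩) ⊓ (NL.getD k ⟨0, hm⟩) < x ∧
          x < (l.getD k ⟨0, hm⟩) ⊔ (NL.getD k ⟨0, hm⟩)) =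
      ((l.take k).toFinset.filter fun x =>
        (l.getD k ⟨0, hm⟩) ⊓ (NL.getD k ⟨0, hm⟩) < x ∧
          x < (l.getD k ⟨0, hm⟩) ⊔ (NL.getD k ⟨0, hm⟩)) := by
    ext x
    simp only [Finset.mem_filter, List.mem_toFinset]
    refine and_congr_left fun hx => ?_
    rw [List.take_succ_eq_append_getElem hkl, List.mem_append, List.mem_singleton,
      ← List.getD_eq_getElem l ⟨0, hm⟩ hkl]
    refine or_iff_left ?_
    rintro rfl
    rcases le_total (l.getD k ⟨0, hm⟩) (NL.getD k ⟨0, hm⟩) with h | h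
    · rw [inf_eq_left.2 h] at hx; exact lt_irrefl _ hx.1
    · rw [sup_eq_left.2 h] at hx; exact lt_irrefl _ hx.2
  rw [hfil]
  have e : ∀ a b c : ℕ, (-1 : MvPowerSeries (Fin m) R) ^ (a + b + c) =
      (-1) ^ (a + 1 + (b + 1)) * (-1) ^ c := by
    intro a b c; ring
  rw [e]
  ring

end
end
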